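/- Let q > 1/2 and let f be a fuzzy q-almost quadratic function from a fuzzy normed space (X, N) to a fuzzy normed space (Y, N′). Then for every x ∈ X the sequence {f(2^n x)/4^n} is a Cauchy sequence in (Y, N′). -/

import Mathlib

/-!
Taking `y = x` and `t = s` in the almost quadratic inequality, and using `f 0 = 0`, gives
`N x (s ^ q) ≤ N' (f (2 • x) - 4 • f x) (2 * s)`. Replacing `x` by `2 ^ n • x` and `s` by
`2 ^ (n / q) * s` leaves the left-hand side unchanged, so after division by `4 ^ (n + 1)` the
`n`-th increment of `f (2 ^ n • x) / 4 ^ n` has degree at least `N x (s ^ q)` at a scale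
proportional to `(2 ^ (1 / q) / 4) ^ n`. These scales are summable exactly when `q > 1 / 2`, and
the bound `N x (s ^ q)` does not depend on `n` and tends to `1` as `s → ∞`.
-/

open Filter Finset

/-- A fuzzy norm on a real vector space, following Bag–Samanta. -/
structure IsFuzzyNorm {X : Type*} [AddCommGroup X] [Module ℝ X] (N : X → ℝ → ℝ) : Prop where
  nonneg : ∀ (x : X) (t : ℝ), 0 ≤ N x t
  le_one : ∀ (x : X) (t : ℝ), N x t ≤ 1
  eq_zero_of_nonpos : ∀ (x : X) (c : ℝ), c ≤ 0 → N x c = 0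
  eq_zero_iff : ∀ x : X, x = 0 ↔ ∀ c : ℝ, 0 < c → N x c = 1
  smul_eq : ∀ (c : ℝ) (x : X) (t : ℝ), c ≠ 0 → N (c • x) t = N x (t / |c|)
  min_le_add : ∀ (x y : X) (s t : ℝ), min (N x s) (N y t) ≤ N (x + y) (s + t)
  mono : ∀ x : X, Monotone (N x)
  tendsto_one : ∀ x : X, Tendsto (N x) atTop (nhds 1)

/-- Convergence of a sequence to a fuzzy limit in a fuzzy normed space. -/
def FuzzyTendsto {X : Type*} [AddCommGroup X] [Module ℝ X] (N : X → ℝ → ℝ)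
    (xs : ℕ → X) (x : X) : Prop :=
  ∀ t : ℝ, 0 < t → Tendsto (fun n => N (xs n - x) t) atTop (nhds 1)

/-- Cauchy sequences in a fuzzy normed space. -/
def FuzzyCauchy {X : Type*} [AddCommGroup X] [Module ℝ X] (N : X → ℝ → ℝ)
    (xs : ℕ → X) : Prop :=
  ∀ ε : ℝ, 0 < ε → ∀ t : ℝ, 0 < t → ∃ n₀ : ℕ, ∀ n ≥ n₀, ∀ p : ℕ, 0 < p →
    1 - ε < N (xs (n + p) - xs n) t

/-- A fuzzy normed space is complete (a fuzzy Banach space) if every Cauchy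
sequence converges. -/
def IsFuzzyComplete {X : Type*} [AddCommGroup X] [Module ℝ X] (N : X → ℝ → ℝ) : Prop :=
  ∀ xs : ℕ → X, FuzzyCauchy N xs → ∃ x : X, FuzzyTendsto N xs x

/-- Quadratic functional equation. -/
def IsQuadratic {X Y : Type*} [AddCommGroup X] [AddCommGroup Y] (Q : X → Y) : Prop :=
  ∀ x y : X, Q (x + y) + Q (x - y) = 2 • Q x + 2 • Q y

/-- Additive functional equation. -/
def IsAdditive {X Y : Type*} [AddCommGroup X] [AddCommGroup Y] (T : X → Y) : Prop :=
  ∀ x y : X, T (x + y) = T x + T y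

namespace IsFuzzyNorm

variable {Y : Type*} [AddCommGroup Y] [Module ℝ Y] {N : Y → ℝ → ℝ}

lemma apply_smul_mul (hN : IsFuzzyNorm N) {c : ℝ} (hc : 0 < c) (y : Y) (t : ℝ) :
    N (c • y) (c * t) = N y t := by
  rw [hN.smul_eq c y _ hc.ne', abs_of_pos hc, mul_div_cancel_left₀ t hc.ne']

lemma lt_apply_sub_of_lt_apply_succ_sub (hN : IsFuzzyNorm N) {u : ℕ → Y} {c : ℕ → ℝ} {δ : ℝ}
    (h : ∀ k, δ < N (u (k + 1) - u k) (c k)) {n m : ℕ} (hnm : n < m) :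
    δ < N (u m - u n) (∑ k ∈ Ico n m, c k) := by
  induction m, hnm using Nat.le_induction with
  | base => simpa using h n
  | succ m hnm ih =>
    calc
      δ < min (N (u m - u n) (∑ k ∈ Ico n m, c k)) (N (u (m + 1) - u m) (c m)) := lt_min ih (h m)
      _ ≤ N (u m - u n + (u (m + 1) - u m)) (∑ k ∈ Ico n m, c k + c m) := hN.min_le_add _ _ _ _
      _ = N (u (m + 1) - u n) (∑ k ∈ Ico n (m + 1), c k) := by
        rw [sum_Ico_succ_top (Nat.le_of_succ_le hnm), add_comm (u m - u n), sub_add_sub_cancel]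

lemma fuzzyCauchy_of_summable (hN : IsFuzzyNorm N) {u : ℕ → Y}
    (h : ∀ ε > 0, ∃ c : ℕ → ℝ, Summable c ∧ ∀ n, 1 - ε < N (u (n + 1) - u n) (c n)) :
    FuzzyCauchy N u := by
  intro ε hε t ht
  obtain ⟨c, hc, hu⟩ := h ε hε
  obtain ⟨n₀, hn₀⟩ := Metric.cauchySeq_iff.1 hc.hasSum.tendsto_sum_nat.cauchySeq t ht
  refine ⟨n₀, fun n hn p hp => ?_⟩
  have hsum : ∑ k ∈ Ico n (n + p), c k < t := by
    rw [sum_Ico_eq_sub c (Nat.le_add_right n p)]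
    exact (le_abs_self _).trans_lt (hn₀ (n + p) (le_add_right hn) n hn)
  exact (hN.lt_apply_sub_of_lt_apply_succ_sub hu (Nat.lt_add_of_pos_right hp)).trans_le
    (hN.mono _ hsum.le)

end IsFuzzyNorm

section DirectMethod

lemma inv_pow_smul_succ_sub {R K X Y : Type*} [Monoid R] [MulAction R X] [DivisionRing K]
    [AddCommGroup Y] [Module K Y] (k : R) {c : K} (hc : c ≠ 0) (f : X → Y) (x : X) (n : ℕ) :
    (c ^ (n + 1))⁻¹ • f (k ^ (n + 1) • x) - (c ^ n)⁻¹ • f (k ^ n • x) =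
      (c ^ (n + 1))⁻¹ • (f (k • k ^ n • x) - c • f (k ^ n • x)) := by
  rw [smul_sub, smul_smul k, smul_smul _ c, ← pow_succ', pow_succ' c, mul_inv_rev,
    inv_mul_cancel_right₀ hc]

variable {X Y : Type*} [AddCommGroup X] [Module ℝ X] [AddCommGroup Y] [Module ℝ Y]
  {N : X → ℝ → ℝ} {N' : Y → ℝ → ℝ} {q k c M : ℝ} {f : X → Y}

lemma le_apply_inv_pow_smul_succ_sub (hN : IsFuzzyNorm N) (hN' : IsFuzzyNorm N') (hq : q ≠ 0)
    (hk : 0 < k) (hc : 0 < c)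
    (hf : ∀ x : X, ∀ s : ℝ, 0 ≤ s → N x (s ^ q) ≤ N' (f (k • x) - c • f x) (M * s))
    (x : X) {s : ℝ} (hs : 0 ≤ s) (n : ℕ) :
    N x (s ^ q) ≤ N' ((c ^ (n + 1))⁻¹ • f (k ^ (n + 1) • x) - (c ^ n)⁻¹ • f (k ^ n • x))
      ((k ^ q⁻¹ / c) ^ n * (M * s / c)) := by
  have hscale : ((k ^ q⁻¹) ^ n * s) ^ q = k ^ n * s ^ q := by
    rw [Real.mul_rpow (by positivity) hs, Real.rpow_pow_comm hk.le,
      Real.rpow_inv_rpow (by positivity) hq]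
  have hrate : (c ^ (n + 1))⁻¹ * (M * ((k ^ q⁻¹) ^ n * s)) =
      (k ^ q⁻¹ / c) ^ n * (M * s / c) := by
    rw [div_pow, pow_succ]
    field_simp
  rw [inv_pow_smul_succ_sub k hc.ne', ← hrate, hN'.apply_smul_mul (by positivity)]
  calc
    N x (s ^ q) = N (k ^ n • x) (((k ^ q⁻¹) ^ n * s) ^ q) := by
      rw [hscale, hN.apply_smul_mul (by positivity)]
    _ ≤ N' (f (k • k ^ n • x) - c • f (k ^ n • x)) (M * ((k ^ q⁻¹) ^ n * s)) :=
      hf _ _ (by positivity)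

lemma fuzzyCauchy_inv_pow_smul (hN : IsFuzzyNorm N) (hN' : IsFuzzyNorm N') (hq : 0 < q)
    (hk : 0 < k) (hc : 0 < c) (hkc : k < c ^ q)
    (hf : ∀ x : X, ∀ s : ℝ, 0 ≤ s → N x (s ^ q) ≤ N' (f (k • x) - c • f x) (M * s)) (x : X) :
    FuzzyCauchy N' (fun n : ℕ => (c ^ n)⁻¹ • f (k ^ n • x)) := by
  have hratio : k ^ q⁻¹ / c < 1 :=
    (div_lt_one hc).2 ((Real.rpow_inv_lt_iff_of_pos hk.le hc.le hq).2 hkc)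
  refine hN'.fuzzyCauchy_of_summable fun ε hε => ?_
  have hlim : Tendsto (fun s : ℝ => N x (s ^ q)) atTop (nhds 1) :=
    (hN.tendsto_one x).comp (tendsto_rpow_atTop hq)
  obtain ⟨s, hsN, hs⟩ : ∃ s : ℝ, 1 - ε < N x (s ^ q) ∧ 0 ≤ s :=
    ((hlim.eventually_const_lt (sub_lt_self 1 hε)).and (eventually_ge_atTop 0)).exists
  exact ⟨fun n => (k ^ q⁻¹ / c) ^ n * (M * s / c),
    (summable_geometric_of_lt_one (by positivity) hratio).mul_right _,
    fun n => hsN.trans_le (le_apply_inv_pow_smul_succ_sub hN hN' hq.ne' hk hc hf x hs n)⟩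

end DirectMethod

/-- Fuzzy `q`-almost quadratic functions from `(X, N)` to `(Y, N')`. The paper's
restriction to exponents `0 < q` with `q ≠ 1 / 2` is not part of the predicate. -/
def IsFuzzyAlmostQuadratic {X Y : Type*} [AddCommGroup X] [AddCommGroup Y]
    (N : X → ℝ → ℝ) (N' : Y → ℝ → ℝ) (q : ℝ) (f : X → Y) : Prop :=
  ∀ x y : X, ∀ s t : ℝ, 0 ≤ s → 0 ≤ t →
    min (N x (t ^ q)) (N y (s ^ q)) ≤
      N' (f (x + y) + f (x - y) - 2 • f x - 2 • f y) (t + s)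

namespace IsFuzzyAlmostQuadratic

variable {X Y : Type*} [AddCommGroup X] [Module ℝ X] [AddCommGroup Y] [Module ℝ Y]
  {N : X → ℝ → ℝ} {N' : Y → ℝ → ℝ} {q : ℝ} {f : X → Y}

lemma map_zero (hf : IsFuzzyAlmostQuadratic N N' q f) (hN : IsFuzzyNorm N)
    (hN' : IsFuzzyNorm N') : f 0 = 0 := by
  have hdefect : f (0 + 0) + f (0 - 0) - 2 • f 0 - 2 • f 0 = 0 := by
    refine (hN'.eq_zero_iff _).2 fun c hc => (hN'.le_one _ _).antisymm ?_
    have h := hf 0 0 (c / 2) (c / 2) (by positivity) (by positivity)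
    rwa [(hN.eq_zero_iff 0).1 rfl _ (by positivity), min_self, add_halves] at h
  have htwo : (2 : ℝ) • f 0 = 0 := by
    rw [add_zero, sub_zero] at hdefect
    calc
      (2 : ℝ) • f 0 = -(f 0 + f 0 - 2 • f 0 - 2 • f 0) := by module
      _ = 0 := by rw [hdefect, neg_zero]
  exact (smul_eq_zero_iff_right two_ne_zero).1 htwo

lemma le_apply_two_smul_sub (hf : IsFuzzyAlmostQuadratic N N' q f) (hN : IsFuzzyNorm N)
    (hN' : IsFuzzyNorm N') (x : X) {s : ℝ} (hs : 0 ≤ s) :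
    N x (s ^ q) ≤ N' (f ((2 : ℝ) • x) - (4 : ℝ) • f x) (2 * s) := by
  have hdefect : f (x + x) + f (x - x) - 2 • f x - 2 • f x =
      f ((2 : ℝ) • x) - (4 : ℝ) • f x := by
    rw [sub_self, hf.map_zero hN hN', two_smul ℝ x]
    module
  simpa only [min_self, hdefect, ← two_mul] using hf x x s s hs hs

end IsFuzzyAlmostQuadratic

/-- For a fuzzy `q`-almost quadratic function with `q > 1/2`, the sequence
`f(2^n x)/4^n` is Cauchy in the fuzzy normed space `(Y, N')`. -/
theorem fuzzy_quadratic_cauchy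
    {X Y : Type*} [AddCommGroup X] [Module ℝ X] [AddCommGroup Y] [Module ℝ Y]
    (N : X → ℝ → ℝ) (N' : Y → ℝ → ℝ)
    (hN : IsFuzzyNorm N) (hN' : IsFuzzyNorm N')
    (q : ℝ) (hq : 1 / 2 < q)
    (f : X → Y)
    (hf : ∀ x y : X, ∀ s t : ℝ, 0 ≤ s → 0 ≤ t →
      min (N x (t ^ q)) (N y (s ^ q)) ≤
        N' (f (x + y) + f (x - y) - 2 • f x - 2 • f y) (t + s)) :
    ∀ x : X, FuzzyCauchy N' (fun n : ℕ => ((4 : ℝ) ^ n)⁻¹ • f (((2 : ℝ) ^ n) • x)) := by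
  have hquad : IsFuzzyAlmostQuadratic N N' q f := hf
  have hfour : (2 : ℝ) < 4 ^ q :=
    calc
      (2 : ℝ) = 4 ^ (1 / 2 : ℝ) := by
        rw [← Real.sqrt_eq_rpow, show (4 : ℝ) = 2 ^ 2 by norm_num, Real.sqrt_sq two_pos.le]
      _ < 4 ^ q := Real.rpow_lt_rpow_of_exponent_lt (by norm_num) hq
  exact fuzzyCauchy_inv_pow_smul hN hN' (one_half_pos.trans hq) two_pos four_pos hfour
    fun x _ hs => hquad.le_apply_two_smul_sub hN hN' x hs
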